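/- For any two seed trees S and S' of sizes |S| ≥ 3 and |S'| ≥ 3 that are not graph-isomorphic, there exists a decorated tree τ = (τ, ℓ) with w(τ) > 1 + α and ℓ(u) ≥ 2 for every vertex u of τ, such that |E[F_τ(T_n^S)] − E[F_τ(T_n^{S'})]| ≈ n^{w(τ)/(1+α)} as n → ∞. -/

import Mathlib

/-!
Write `Λ n f = E[f (T_n^S)] - E[f (T_n^{S'})]` for `n ≥ N = max k k'`. A sum over the embeddings of
a tree `σ` of a function `g` of the degrees of the image vertices evolves, in one growth step,
through an operator `K` (`growOp`) acting on `g`, up to a contribution of the embeddings using the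
new vertex. As the new vertex is a leaf, that contribution is constant or a sum of the same kind for
`σ` with a leaf removed (`stepOp_embSum`, `exists_lower`). Choose therefore `σ` with the least number
of vertices such that `Λ N` does not vanish on all the sums attached to `σ`
(`IsGrowing.exists_minimal`). Blindness of the smaller trees persists in time, so the sums attached
to `σ` evolve exactly through `K`.

The operator `K` is diagonalised by the products over the vertices of rising factorials of
`deg - 1 + α` with exponents `l`, with eigenvalue `1 + (∑ l) / ((1 + α) n - 2)` at size `n`
(`growOp_riseFun`). Euler's product for the Gamma function turns the product of the eigenvalues into
`c n ^ (∑ l / (1 + α))` (`tendsto_growFactor`). Descending factorials of `deg - 1` are rising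
factorials of `deg - 1 + α` plus terms of smaller exponents, so the observable of decoration `l` has
the order `n ^ (∑ l / (1 + α))` as soon as `Λ N` does not vanish on the eigenfunction of exponents
`l` (`IsGrowing.tendsto_embObs_fallFun`).

Such an `l` exists with all entries as large as desired, because the eigenfunctions with large
exponents separate degree vectors in a bounded range, by Lagrange interpolation
(`IsGrowing.exists_riseFun_ne_zero`). With entries at least `2` there are no loose leaves and the
weight is `∑ l`.

A distinguishing tree exists, since the chain from the smaller seed reaches at size `N` a tree `G`
not isomorphic to the larger seed, and `G` has no embedding in the latter
(`exists_expDiff_ne_zero`).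
-/

open MeasureTheory Filter Asymptotics

noncomputable section

namespace AffinePA

instance (V : Type*) : MeasurableSpace (SimpleGraph V) := ⊤

/-- The degree of a vertex. -/
def degR {V : Type*} (G : SimpleGraph V) (v : V) : ℕ := Nat.card {w // G.Adj v w}

/-- The tree on `n+1` vertices obtained from `G` by attaching the new vertex to `u`. -/
def extendTree {n : ℕ} (G : SimpleGraph (Fin n)) (u : Fin n) : SimpleGraph (Fin (n + 1)) :=
  SimpleGraph.fromRel fun a b =>
    (∃ a' b' : Fin n, a = Fin.castSucc a' ∧ b = Fin.castSucc b' ∧ G.Adj a' b') ∨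
      (a = Fin.castSucc u ∧ b = Fin.last n)

/-- One step of the affine preferential attachment dynamics. -/
def stepMeasure (α : ℝ) {n : ℕ} (G : SimpleGraph (Fin n)) :
    Measure (SimpleGraph (Fin (n + 1))) :=
  ∑ u : Fin n,
    ENNReal.ofReal (((degR G u : ℝ) - 1 + α) / ((1 + α) * (n : ℝ) - 2)) •
      Measure.dirac (extendTree G u)

/-- The law of the α-PA tree with `m` added vertices, started from the seed `S`. -/
def paLaw (α : ℝ) {k : ℕ} (S : SimpleGraph (Fin k)) :
    (m : ℕ) → Measure (SimpleGraph (Fin (k + m)))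
  | 0 => Measure.dirac S
  | m + 1 => (paLaw α S m).bind (stepMeasure α)

/-- The weight `∏_u [deg_T(f u) - 1]_{ℓ u}` of a map `f`. -/
def embWeight {V W : Type*} [Fintype V] (T : SimpleGraph W) (ℓ : V → ℕ) (f : V → W) : ℝ :=
  ∏ u : V, ((degR T (f u) - 1).descFactorial (ℓ u) : ℝ)

/-- The observable `F_{(τ,ℓ)}(T)`. -/
def obsG {V W : Type*} [Fintype V] (τ : SimpleGraph V) (ℓ : V → ℕ) (T : SimpleGraph W) : ℝ :=
  ∑ᶠ φ : τ ↪g T, embWeight T ℓ ⇑φ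

/-- The weight `w(τ,ℓ)` of a decorated tree. -/
def weightG {V : Type*} [Fintype V] (τ : SimpleGraph V) (ℓ : V → ℕ) : ℕ :=
  if Fintype.card V ≤ 2 ∧ ∀ v, ℓ v = 0 then 1
  else (∑ v, ℓ v) + Nat.card {v // degR τ v = 1 ∧ ℓ v = 0}

/-- A decorated tree: a finite graph on `Fin n` with nonnegative integer decorations. -/
structure DecTree where
  n : ℕ
  tree : SimpleGraph (Fin n)
  dec : Fin n → ℕ

def DecTree.wt (τ : DecTree) : ℕ := weightG τ.tree τ.dec

def DecTree.decSum (τ : DecTree) : ℕ := ∑ v, τ.dec v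

def DecTree.obs (τ : DecTree) {W : Type*} (T : SimpleGraph W) : ℝ := obsG τ.tree τ.dec T

/-- The strict partial order `≺` on decorated trees. -/
def DecLt (σ τ : DecTree) : Prop :=
  (σ.wt < τ.wt ∧ σ.n ≤ τ.n) ∨ (σ.wt = τ.wt ∧ σ.n < τ.n) ∨
    (σ.wt = τ.wt ∧ σ.n = τ.n ∧ σ.decSum < τ.decSum)

open Classical in
/-- `F_{τ+τ}(T)`: sum over pairs of embeddings with overlapping images. -/
def obsOverlapG {V W : Type*} [Fintype V] (τ : SimpleGraph V) (ℓ : V → ℕ)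
    (T : SimpleGraph W) : ℝ :=
  ∑ᶠ (φ₁ : τ ↪g T) (φ₂ : τ ↪g T),
    if (Set.range ⇑φ₁ ∩ Set.range ⇑φ₂).Nonempty then
      embWeight T ℓ ⇑φ₁ * embWeight T ℓ ⇑φ₂
    else 0

open Classical in
/-- `F_{τ,σ}(T)`: sum over pairs of embeddings with disjoint images. -/
def obsDisjG {V₁ V₂ W : Type*} [Fintype V₁] [Fintype V₂] (τ : SimpleGraph V₁) (ℓτ : V₁ → ℕ)
    (σ : SimpleGraph V₂) (ℓσ : V₂ → ℕ) (T : SimpleGraph W) : ℝ :=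
  ∑ᶠ (φ₁ : τ ↪g T) (φ₂ : σ ↪g T),
    if Disjoint (Set.range ⇑φ₁) (Set.range ⇑φ₂) then
      embWeight T ℓτ ⇑φ₁ * embWeight T ℓσ ⇑φ₂
    else 0

/-- `f ≈ g` : same order of magnitude, eventually. -/
def asympEquiv (f g : ℕ → ℝ) : Prop :=
  ∃ C : ℝ, 0 < C ∧ ∀ᶠ n in atTop, f n ≤ C * g n ∧ g n ≤ C * f n

/-- Descending factorial `[x]_l` of a real number. -/
def descPoch (x : ℝ) (l : ℕ) : ℝ := ∏ i ∈ Finset.range l, (x - (i : ℝ))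

/-- Total variation distance between two measures. -/
def tvDist {X : Type*} [MeasurableSpace X] (μ ν : Measure X) : ℝ :=
  ⨆ s : {s : Set X // MeasurableSet s}, |(μ ↑s).toReal - (ν ↑s).toReal|

open Classical in
/-- The contribution to `F_τ` of embeddings whose image meets the seed. -/
def obsMeetSeed (k m : ℕ) {r : ℕ} (τ : SimpleGraph (Fin r)) (ℓ : Fin r → ℕ)
    (T : SimpleGraph (Fin (k + m))) : ℝ :=
  ∑ᶠ φ : τ ↪g T,
    if ∃ (x : Fin r) (y : Fin k), φ x = Fin.castAdd m y then embWeight T ℓ ⇑φ else 0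

/-- The contribution to `F_τ` of embeddings contained in the seed. -/
def obsInSeed (k m : ℕ) {r : ℕ} (τ : SimpleGraph (Fin r)) (ℓ : Fin r → ℕ)
    (S : SimpleGraph (Fin k)) (T : SimpleGraph (Fin (k + m))) : ℝ :=
  ∑ᶠ φ : τ ↪g S, embWeight T ℓ fun u => Fin.castAdd m (φ u)

/-- `D_{τ,d}(T)`: the number of perfect embeddings of `(τ,d)` in `T`. -/
def perfCount {V W : Type*} (τ : SimpleGraph V) (d : V → ℕ) (T : SimpleGraph W) : ℕ :=
  Nat.card {φ : τ ↪g T // ∀ u, degR T (φ u) = d u}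

/-- `τ` is `(T₁,T₂)`-blind. -/
def IsBlind {V W₁ W₂ : Type*} (τ : SimpleGraph V) (T₁ : SimpleGraph W₁)
    (T₂ : SimpleGraph W₂) : Prop :=
  ∀ d : V → ℕ, (∀ u, 1 ≤ d u) → perfCount τ d T₁ = perfCount τ d T₂

/-- `D_{σ,τ,d}(T)`: perfect embeddings of `(τ,d)` meeting the seed exactly in `φ(A)`. -/
def perfCountSeed (k m : ℕ) {r : ℕ} (τ : SimpleGraph (Fin r)) (A : Finset (Fin r))
    (d : Fin r → ℕ) (T : SimpleGraph (Fin (k + m))) : ℕ :=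
  Nat.card {φ : τ ↪g T //
    (∀ u, degR T (φ u) = d u) ∧ ∀ u : Fin r, (∃ y : Fin k, φ u = Fin.castAdd m y) ↔ u ∈ A}

/-- The σ-algebra generated by `T_0, …, T_m`. -/
def natFilt {Ω : Type*} [MeasurableSpace Ω] {k : ℕ}
    (T : (m : ℕ) → Ω → SimpleGraph (Fin (k + m))) (m : ℕ) : MeasurableSpace Ω :=
  ⨆ j ∈ Set.Iic m, MeasurableSpace.comap (T j) inferInstance

/-- `(T_m)` is an α-PA chain started from the seed `S`, on the probability space `(Ω,P)`. -/
structure IsPAChain (α : ℝ) {k : ℕ} (S : SimpleGraph (Fin k)) {Ω : Type*} [MeasurableSpace Ω]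
    (P : Measure Ω) (T : (m : ℕ) → Ω → SimpleGraph (Fin (k + m))) : Prop where
  isProb : IsProbabilityMeasure P
  meas : ∀ m, Measurable (T m)
  init : ∀ᵐ ω ∂P, T 0 ω = S
  step : ∀ (m : ℕ) (f : SimpleGraph (Fin (k + (m + 1))) → ℝ),
    P[(fun ω => f (T (m + 1) ω))|natFilt T m] =ᵐ[P]
      fun ω => ∫ G, f G ∂stepMeasure α (T m ω)

/-- The natural filtration of the chain. -/
def natFiltration {Ω : Type*} [mΩ : MeasurableSpace Ω] {k : ℕ}
    (T : (m : ℕ) → Ω → SimpleGraph (Fin (k + m))) (hT : ∀ m, Measurable (T m)) :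
    Filtration ℕ mΩ where
  seq := natFilt T
  mono' _ _ hij := biSup_mono fun _ hx => le_trans hx hij
  le' _ := iSup_le fun l => iSup_le fun _ => (hT l).comap_le

/-- Isomorphism of simple graphs as a setoid. -/
def isoSetoid (n : ℕ) : Setoid (SimpleGraph (Fin n)) where
  r G H := Nonempty (G ≃g H)
  iseqv := ⟨fun G => ⟨RelIso.refl G.Adj⟩, fun ⟨e⟩ => ⟨e.symm⟩, fun ⟨e⟩ ⟨f⟩ => ⟨e.trans f⟩⟩

/-- Isomorphism classes of graphs on `n` vertices. -/
def IsoClass (n : ℕ) : Type := Quotient (isoSetoid n)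

instance (n : ℕ) : MeasurableSpace (IsoClass n) := ⊤

/-- The law of the isomorphism class of the α-PA tree with `n` vertices grown from `S`. -/
def isoClassLaw (α : ℝ) {k : ℕ} (S : SimpleGraph (Fin k)) (n : ℕ) : Measure (IsoClass n) :=
  if h : k ≤ n then
    (paLaw α S (n - k)).map fun G =>
      Quotient.mk (isoSetoid n) (G.map (finCongr (Nat.add_sub_cancel' h)).toEmbedding)
  else 0

/-! ### Expectations under the growth chain -/

/-- The probability that the new vertex is attached to `u`. It is kept in the form in which it
enters `stepMeasure`, so that it is nonnegative for every graph `G`. -/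
def attachProb (α : ℝ) {n : ℕ} (G : SimpleGraph (Fin n)) (u : Fin n) : ℝ :=
  (ENNReal.ofReal (((degR G u : ℝ) - 1 + α) / ((1 + α) * (n : ℝ) - 2))).toReal

/-- The one-step transition operator of the chain, acting on functions of graphs. -/
def stepOp (α : ℝ) {n : ℕ} (f : SimpleGraph (Fin (n + 1)) → ℝ) (G : SimpleGraph (Fin n)) : ℝ :=
  ∑ u, attachProb α G u * f (extendTree G u)

instance stepMeasure_finite (α : ℝ) {n : ℕ} (G : SimpleGraph (Fin n)) :
    IsFiniteMeasure (stepMeasure α G) := by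
  constructor
  simp [stepMeasure]

instance (n : ℕ) : DiscreteMeasurableSpace (SimpleGraph (Fin n)) := ⟨fun _ => trivial⟩

lemma measurable_stepMeasure (α : ℝ) {n : ℕ} :
    Measurable (stepMeasure α (n := n)) := measurable_from_top

lemma paLaw_finite (α : ℝ) {k : ℕ} (S : SimpleGraph (Fin k)) (m : ℕ) :
    IsFiniteMeasure (paLaw α S m) := by
  induction m with
  | zero => simp only [paLaw]; infer_instance
  | succ m ih =>
    constructor
    simp only [paLaw]
    rw [Measure.bind_apply MeasurableSet.univ (measurable_stepMeasure α).aemeasurable,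
      lintegral_fintype]
    exact ENNReal.sum_lt_top.2 fun G _ =>
      ENNReal.mul_lt_top (measure_lt_top _ _) (measure_lt_top _ _)

lemma integral_stepMeasure (α : ℝ) {n : ℕ} (f : SimpleGraph (Fin (n + 1)) → ℝ)
    (G : SimpleGraph (Fin n)) : ∫ H, f H ∂stepMeasure α G = stepOp α f G := by
  unfold stepMeasure stepOp
  rw [integral_finsetSum_measure]
  · simp [attachProb, integral_smul_measure]
  · intro u _
    exact Integrable.smul_measure (integrable_dirac (by simp)) (by simp)

lemma integral_paLaw_succ (α : ℝ) {k : ℕ} (S : SimpleGraph (Fin k)) (m : ℕ)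
    (f : SimpleGraph (Fin (k + m + 1)) → ℝ) :
    ∫ G, f G ∂paLaw α S (m + 1) = ∫ G, stepOp α f G ∂paLaw α S m := by
  have := paLaw_finite α S m
  have := paLaw_finite α S (m + 1)
  have h1 : ∀ H : SimpleGraph (Fin (k + (m + 1))), (paLaw α S (m + 1)).real {H}
      = ∑ G, (paLaw α S m).real {G} * (stepMeasure α G).real {H} := by
    intro H
    simp only [Measure.real, paLaw]
    rw [Measure.bind_apply (MeasurableSet.singleton _) (measurable_stepMeasure α).aemeasurable,
      lintegral_fintype, ENNReal.toReal_sum]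
    · exact Finset.sum_congr rfl fun G _ => by rw [ENNReal.toReal_mul, mul_comm]
    · intro G _
      exact ENNReal.mul_ne_top (measure_ne_top _ _) (measure_ne_top _ _)
  have h2 : ∫ G, f G ∂paLaw α S (m + 1)
      = ∑ H : SimpleGraph (Fin (k + m + 1)), (paLaw α S (m + 1)).real {H} • f H :=
    integral_fintype .of_finite
  rw [h2, integral_fintype .of_finite]
  simp_rw [← integral_stepMeasure, integral_fintype (Integrable.of_finite), smul_eq_mul,
    Finset.mul_sum]
  rw [Finset.sum_comm]
  refine Finset.sum_congr rfl fun H _ => ?_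
  have := h1 H
  rw [this, Finset.sum_mul]
  exact Finset.sum_congr rfl fun G _ => by ring

lemma integral_paLaw_zero (α : ℝ) {k : ℕ} (S : SimpleGraph (Fin k))
    (f : SimpleGraph (Fin k) → ℝ) : ∫ G, f G ∂paLaw α S 0 = f S :=
  integral_dirac (α := SimpleGraph (Fin k)) f S

/-! ### Degrees after one step -/

open Classical in
lemma degR_eq_sum {V : Type*} [Fintype V] (G : SimpleGraph V) (v : V) :
    degR G v = ∑ w, if G.Adj v w then 1 else 0 := by
  simp [degR, Nat.card_eq_fintype_card, Fintype.card_subtype]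

open Classical in
lemma degR_eq_degree {V : Type*} [Fintype V] (G : SimpleGraph V) (v : V) :
    degR G v = G.degree v := by
  rw [degR_eq_sum, ← SimpleGraph.card_neighborFinset_eq_degree,
    SimpleGraph.neighborFinset_eq_filter]
  simp

section Extend

variable {n : ℕ} (G : SimpleGraph (Fin n)) (v : Fin n)

@[simp] lemma extend_adj_castSucc (a b : Fin n) :
    (extendTree G v).Adj a.castSucc b.castSucc ↔ G.Adj a b := by
  simp only [extendTree, SimpleGraph.fromRel_adj]
  constructor
  · rintro ⟨-, (⟨a', b', h1, h2, h⟩ | ⟨-, h⟩) | (⟨a', b', h1, h2, h⟩ | ⟨-, h⟩)⟩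
    · rw [Fin.castSucc_inj] at h1 h2; subst h1 h2; exact h
    · exact absurd h (Fin.castSucc_lt_last b).ne
    · rw [Fin.castSucc_inj] at h1 h2; subst h1 h2; exact h.symm
    · exact absurd h (Fin.castSucc_lt_last a).ne
  · intro h
    exact ⟨fun e => h.ne (Fin.castSucc_injective _ e), Or.inl (Or.inl ⟨a, b, rfl, rfl, h⟩)⟩

@[simp] lemma extend_adj_last (a : Fin n) :
    (extendTree G v).Adj a.castSucc (Fin.last n) ↔ a = v := by
  simp only [extendTree, SimpleGraph.fromRel_adj]
  constructor
  · rintro ⟨-, (⟨a', b', h1, h2, h⟩ | ⟨h, -⟩) | (⟨a', b', h1, h2, h⟩ | ⟨h, -⟩)⟩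
    · exact absurd h2.symm (Fin.castSucc_lt_last b').ne
    · exact Fin.castSucc_injective _ h
    · exact absurd h1.symm (Fin.castSucc_lt_last a').ne
    · exact absurd h.symm (Fin.castSucc_lt_last v).ne
  · rintro rfl
    exact ⟨(Fin.castSucc_lt_last a).ne, Or.inl (Or.inr (by simp))⟩

@[simp] lemma extend_last_adj (a : Fin n) :
    (extendTree G v).Adj (Fin.last n) a.castSucc ↔ a = v := by
  rw [SimpleGraph.adj_comm, extend_adj_last]

lemma degR_extend_castSucc (a : Fin n) :
    degR (extendTree G v) a.castSucc = degR G a + if a = v then 1 else 0 := by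
  classical
  rw [degR_eq_sum, degR_eq_sum, Fin.sum_univ_castSucc]
  simp

lemma degR_extend_last : degR (extendTree G v) (Fin.last n) = 1 := by
  classical
  rw [degR_eq_sum, Fin.sum_univ_castSucc]
  simp

end Extend

lemma sum_degR_of_isTree {n : ℕ} {G : SimpleGraph (Fin n)} (hG : G.IsTree) :
    ∑ u, degR G u + 2 = 2 * n := by
  classical
  have h1 := hG.card_edgeFinset
  have h2 := G.sum_degrees_eq_twice_card_edges
  simp only [degR_eq_degree]
  simp only [Fintype.card_fin] at h1
  omega

lemma one_le_degR {n : ℕ} {G : SimpleGraph (Fin n)} (hG : G.IsTree) (hn : 2 ≤ n) (u : Fin n) :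
    1 ≤ degR G u := by
  classical
  rw [degR_eq_degree]
  have : Nontrivial (Fin n) := Fin.nontrivial_iff_two_le.2 hn
  exact hG.connected.preconnected.degree_pos_of_nontrivial u

lemma degR_le {n : ℕ} (G : SimpleGraph (Fin n)) (u : Fin n) : degR G u ≤ n := by
  classical
  rw [degR_eq_degree]
  exact (G.degree_lt_card_verts u).le.trans (by simp)

lemma isTree_extend {n : ℕ} {G : SimpleGraph (Fin n)} (hG : G.IsTree) (v : Fin n) :
    (extendTree G v).IsTree := by
  classical
  rw [SimpleGraph.isTree_iff_connected_and_card]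
  constructor
  · let f : G →g extendTree G v := ⟨Fin.castSucc, fun h => (extend_adj_castSucc G v _ _).2 h⟩
    have key : ∀ a, (extendTree G v).Reachable v.castSucc a := by
      intro a
      refine Fin.lastCases ?_ (fun a => ?_) a
      · exact ((extend_adj_last G v v).2 rfl).reachable
      · exact (hG.connected.preconnected v a).map f
    have : Nonempty (Fin (n + 1)) := ⟨0⟩
    exact ⟨fun a b => (key a).symm.trans (key b)⟩
  · have h1 := sum_degR_of_isTree hG
    have h2 := (extendTree G v).sum_degrees_eq_twice_card_edges
    simp only [← degR_eq_degree] at h2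
    rw [Fin.sum_univ_castSucc] at h2
    simp only [degR_extend_castSucc, degR_extend_last, Finset.sum_add_distrib,
      Finset.sum_ite_eq', Finset.mem_univ, if_true] at h2
    rw [Nat.card_eq_fintype_card, Nat.card_eq_fintype_card, ← SimpleGraph.edgeFinset_card]
    simp only [Fintype.card_fin]
    omega

lemma attachProb_nonneg (α : ℝ) {n : ℕ} (G : SimpleGraph (Fin n)) (u : Fin n) :
    0 ≤ attachProb α G u := ENNReal.toReal_nonneg

/-- The normalising constant of the attachment probabilities at size `n`. -/
def normZ (α : ℝ) (n : ℕ) : ℝ := (1 + α) * (n : ℝ) - 2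

lemma normZ_pos {α : ℝ} (hα : 0 < α) {n : ℕ} (hn : 2 ≤ n) : 0 < normZ α n := by
  unfold normZ
  have : (2 : ℝ) ≤ n := by exact_mod_cast hn
  nlinarith

lemma attachProb_eq {α : ℝ} (hα : 0 < α) {n : ℕ} (hn : 2 ≤ n) {G : SimpleGraph (Fin n)}
    (hG : G.IsTree) (u : Fin n) :
    attachProb α G u = ((degR G u : ℝ) - 1 + α) / normZ α n := by
  have h1 : (1 : ℝ) ≤ degR G u := by exact_mod_cast one_le_degR hG hn u
  exact ENNReal.toReal_ofReal (div_nonneg (by linarith) (normZ_pos hα hn).le)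

lemma attachProb_pos {α : ℝ} (hα : 0 < α) {n : ℕ} (hn : 2 ≤ n) {G : SimpleGraph (Fin n)}
    (hG : G.IsTree) (u : Fin n) : 0 < attachProb α G u := by
  have h1 : (1 : ℝ) ≤ degR G u := by exact_mod_cast one_le_degR hG hn u
  rw [attachProb_eq hα hn hG]
  exact div_pos (by linarith) (normZ_pos hα hn)

lemma sum_attachProb {α : ℝ} (hα : 0 < α) {n : ℕ} (hn : 2 ≤ n) {G : SimpleGraph (Fin n)}
    (hG : G.IsTree) : ∑ u, attachProb α G u = 1 := by
  simp_rw [attachProb_eq hα hn hG]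
  rw [← Finset.sum_div, div_eq_one_iff_eq (normZ_pos hα hn).ne']
  have h : (∑ u, (degR G u : ℝ)) + 2 = 2 * n := by exact_mod_cast sum_degR_of_isTree hG
  simp only [Finset.sum_add_distrib, Finset.sum_sub_distrib, normZ]
  simp
  linarith

/-! ### Sums over embeddings and one step of growth -/

instance embFinite {V W : Type*} [Finite V] [Finite W] (σ : SimpleGraph V) (G : SimpleGraph W) :
    Finite (σ ↪g G) := DFunLike.finite _

instance embFintype {V W : Type*} [Finite V] [Finite W] (σ : SimpleGraph V) (G : SimpleGraph W) :
    Fintype (σ ↪g G) := Fintype.ofFinite _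

/-- The sum, over all embeddings of `σ` into `G`, of a function `g` of the degrees in `G` of the
images of the vertices of `σ`. -/
def embSum {V : Type} [Fintype V] (σ : SimpleGraph V) (g : (V → ℕ) → ℝ) {n : ℕ}
    (G : SimpleGraph (Fin n)) : ℝ :=
  ∑ φ : σ ↪g G, g (fun u => degR G (φ u))

open Classical in
/-- The action of one growth step on functions of the degrees of finitely many tracked vertices:
the vertex `u` gains a neighbour with probability `(d u - 1 + α) / z`. -/
def growOp {V : Type} [Fintype V] (α z : ℝ) (g : (V → ℕ) → ℝ) (d : V → ℕ) : ℝ :=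
  g d + ∑ u, ((d u : ℝ) - 1 + α) / z * (g (Function.update d u (d u + 1)) - g d)

/-- The inclusion of a tree in its one-vertex extension. -/
def extEmb {n : ℕ} (G : SimpleGraph (Fin n)) (v : Fin n) : G ↪g extendTree G v where
  toFun := Fin.castSucc
  inj' := Fin.castSucc_injective n
  map_rel_iff' := extend_adj_castSucc G v _ _

@[simp] lemma extEmb_apply {n : ℕ} (G : SimpleGraph (Fin n)) (v a : Fin n) :
    extEmb G v a = a.castSucc := rfl

/-- An embedding into the extension that avoids the new vertex is an embedding into `G`. -/
lemma exists_lift {V : Type} {σ : SimpleGraph V} {n : ℕ} {G : SimpleGraph (Fin n)} {v : Fin n}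
    (φ : σ ↪g extendTree G v) (h : ∀ w, φ w ≠ Fin.last n) :
    ∃ ψ : σ ↪g G, ∀ w, φ w = (ψ w).castSucc := by
  choose f hf using fun w => Fin.exists_castSucc_eq.2 (h w)
  refine ⟨⟨⟨f, fun a b hab => φ.injective ?_⟩, fun {a b} => ?_⟩, fun w => (hf w).symm⟩
  · rw [← hf, ← hf, hab]
  · rw [← φ.map_adj_iff, ← hf, ← hf, extend_adj_castSucc]; rfl

open Classical in
/-- The contribution to the expected value of `embSum σ g` after one step of those embeddings that
send the vertex `u` of `σ` to the new vertex. -/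
def newPart {V : Type} [Fintype V] (α : ℝ) (σ : SimpleGraph V) (g : (V → ℕ) → ℝ) (u : V) {n : ℕ}
    (G : SimpleGraph (Fin n)) : ℝ :=
  ∑ v, attachProb α G v * ∑ φ : σ ↪g extendTree G v,
    if φ u = Fin.last n then g (fun w => degR (extendTree G v) (φ w)) else 0

open Classical in
lemma sum_extend {V : Type} [Fintype V] (σ : SimpleGraph V) (g : (V → ℕ) → ℝ) {n : ℕ}
    (G : SimpleGraph (Fin n)) (v : Fin n) :
    embSum σ g (extendTree G v)
      = (∑ ψ : σ ↪g G, g (fun w => degR G (ψ w) + if ψ w = v then 1 else 0))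
        + ∑ u, ∑ φ : σ ↪g extendTree G v,
          if φ u = Fin.last n then g (fun w => degR (extendTree G v) (φ w)) else 0 := by
  have h1 : ∀ φ : σ ↪g extendTree G v, g (fun w => degR (extendTree G v) (φ w))
      = (if ∀ w, φ w ≠ Fin.last n then g (fun w => degR (extendTree G v) (φ w)) else 0)
        + ∑ u, if φ u = Fin.last n then g (fun w => degR (extendTree G v) (φ w)) else 0 := by
    intro φ
    by_cases h : ∀ w, φ w ≠ Fin.last n
    · simp [h]
    · rw [if_neg h]
      push Not at h
      obtain ⟨u, hu⟩ := h
      rw [Finset.sum_eq_single u, if_pos hu, zero_add]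
      · intro b _ hb
        exact if_neg fun hb' => hb (φ.injective (hb'.trans hu.symm))
      · simp
  unfold embSum
  rw [Finset.sum_congr rfl fun φ _ => h1 φ, Finset.sum_add_distrib, Finset.sum_comm]
  congr 1
  rw [← Finset.sum_filter]
  symm
  refine Finset.sum_bij (fun ψ _ => ψ.trans (extEmb G v)) ?_ ?_ ?_ ?_
  · intro ψ _
    simp only [Finset.mem_filter, Finset.mem_univ, true_and]
    exact fun w => (Fin.castSucc_lt_last _).ne
  · intro ψ _ ψ' _ h
    ext w
    have := DFunLike.congr_fun h w
    exact congrArg Fin.val (Fin.castSucc_injective _ this)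
  · intro φ hφ
    obtain ⟨ψ, hψ⟩ := exists_lift φ (Finset.mem_filter.1 hφ).2
    exact ⟨ψ, Finset.mem_univ _, by ext w; rw [hψ w]; rfl⟩
  · intro ψ _
    congr 1
    funext w
    exact (degR_extend_castSucc G v (ψ w)).symm

/-- One growth step: the embeddings avoiding the new vertex evolve through `growOp`. -/
lemma stepOp_embSum {α : ℝ} (hα : 0 < α) {V : Type} [Fintype V] (σ : SimpleGraph V)
    (g : (V → ℕ) → ℝ) {n : ℕ} (hn : 2 ≤ n) {G : SimpleGraph (Fin n)} (hG : G.IsTree) :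
    stepOp α (embSum σ g) G
      = embSum σ (growOp α (normZ α n) g) G + ∑ u, newPart α σ g u G := by
  classical
  unfold stepOp newPart
  rw [Finset.sum_comm (s := (Finset.univ : Finset V))]
  simp_rw [sum_extend, mul_add, Finset.sum_add_distrib, ← Finset.mul_sum]
  congr 1
  simp_rw [Finset.mul_sum]
  rw [Finset.sum_comm]
  unfold embSum
  refine Finset.sum_congr rfl fun ψ _ => ?_
  -- The total mass of the attachment probabilities is `1`, so `g` at the old degrees splits off.
  have h1 : ∑ v, attachProb α G v * g (fun w => degR G (ψ w) + if ψ w = v then 1 else 0)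
      = g (fun w => degR G (ψ w)) + ∑ v, attachProb α G v *
        (g (fun w => degR G (ψ w) + if ψ w = v then 1 else 0) - g (fun w => degR G (ψ w))) := by
    simp_rw [mul_sub, Finset.sum_sub_distrib, ← Finset.sum_mul]
    rw [sum_attachProb hα hn hG]; ring
  rw [h1, growOp]
  congr 1
  symm
  refine Fintype.sum_of_injective ψ ψ.injective _ _ ?_ ?_
  · intro v hv
    have : (fun w => degR G (ψ w) + if ψ w = v then 1 else 0) = fun w => degR G (ψ w) := by
      funext w
      rw [if_neg fun h => hv ⟨w, h⟩, add_zero]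
    rw [this, sub_self, mul_zero]
  · intro u
    rw [attachProb_eq hα hn hG]
    congr 3
    funext w
    by_cases h : w = u
    · subst h; simp
    · rw [Function.update_of_ne h, if_neg fun h' => h (ψ.injective h'), add_zero]

/-- The functions of graphs that are constant or are sums over embeddings of a tree with fewer than
`r` vertices. -/
def IsLower (r : ℕ) (f : ∀ n, SimpleGraph (Fin n) → ℝ) : Prop :=
  (∃ c : ℝ, f = fun _ _ => c) ∨
    ∃ (V : Type) (_ : Fintype V) (σ : SimpleGraph V) (g : (V → ℕ) → ℝ),
      σ.IsTree ∧ Fintype.card V < r ∧ f = fun _ G => embSum σ g G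

/-- If `φ` sends `u` to the new vertex, every neighbour of `u` is sent to the attachment vertex. -/
lemma apply_eq_of_adj {V : Type} {σ : SimpleGraph V} {n : ℕ} {G : SimpleGraph (Fin n)} {v : Fin n}
    (φ : σ ↪g extendTree G v) {u w : V} (hu : φ u = Fin.last n) (hw : σ.Adj u w) :
    φ w = v.castSucc := by
  have h1 := φ.map_adj_iff.2 hw
  rw [hu] at h1
  obtain ⟨a, ha⟩ := Fin.exists_castSucc_eq.2 h1.ne'
  rw [← ha, extend_last_adj] at h1
  rw [← ha, h1]

open Classical in
/-- Embeddings of `σ` sending the leaf `u` to the new vertex correspond to embeddings of `σ` without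
`u` sending the neighbour `p` of `u` to the attachment vertex. -/
lemma sum_newPart_leaf {V : Type} [Fintype V] (σ : SimpleGraph V) (g : (V → ℕ) → ℝ) {u p : V}
    (hup : σ.Adj u p) (hp : ∀ w, σ.Adj u w → w = p) (hpu : p ∈ ({u}ᶜ : Set V)) {n : ℕ}
    (G : SimpleGraph (Fin n)) (v : Fin n) :
    (∑ φ : σ ↪g extendTree G v,
      if φ u = Fin.last n then g (fun w => degR (extendTree G v) (φ w)) else 0)
    = ∑ ψ : σ.induce ({u}ᶜ : Set V) ↪g G, if ψ ⟨p, hpu⟩ = v then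
        g (fun w => if hw : w = u then 1
          else degR G (ψ ⟨w, hw⟩) + if w = p then 1 else 0) else 0 := by
  rw [← Finset.sum_filter, ← Finset.sum_filter]
  symm
  have hb : ∀ ψ : σ.induce ({u}ᶜ : Set V) ↪g G, ψ ⟨p, hpu⟩ = v →
      ∃ φ : σ ↪g extendTree G v, φ u = Fin.last n ∧
        ∀ w (hw : w ≠ u), φ w = (ψ ⟨w, hw⟩).castSucc := by
    intro ψ hψ
    let f : V → Fin (n + 1) := fun w => if hw : w = u then Fin.last n else (ψ ⟨w, hw⟩).castSucc
    have fu : f u = Fin.last n := by simp [f]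
    have fw : ∀ w (hw : w ≠ u), f w = (ψ ⟨w, hw⟩).castSucc := fun w hw => by simp [f, hw]
    -- The new vertex is adjacent exactly to `v`, the image of `p`.
    have hlast : ∀ w (hw : w ≠ u),
        (extendTree G v).Adj (Fin.last n) (ψ ⟨w, hw⟩).castSucc ↔ σ.Adj u w := by
      intro w hw
      rw [extend_last_adj, ← hψ, ψ.injective.eq_iff, Subtype.ext_iff]
      exact ⟨fun h => (show w = p from h) ▸ hup, hp w⟩
    refine ⟨⟨⟨f, fun a b hab => ?_⟩, fun {a b} => ?_⟩, fu, fw⟩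
    · by_cases ha : a = u <;> by_cases hb : b = u
      · rw [ha, hb]
      · rw [ha, fu, fw b hb] at hab
        exact absurd hab.symm (Fin.castSucc_lt_last _).ne
      · rw [hb, fu, fw a ha] at hab
        exact absurd hab (Fin.castSucc_lt_last _).ne
      · rw [fw a ha, fw b hb] at hab
        exact congrArg Subtype.val (ψ.injective (Fin.castSucc_injective _ hab))
    · change (extendTree G v).Adj (f a) (f b) ↔ σ.Adj a b
      by_cases ha : a = u <;> by_cases hb : b = u
      · subst ha hb; simp
      · rw [ha, fu, fw b hb, hlast]
      · rw [hb, fu, fw a ha, SimpleGraph.adj_comm, hlast, SimpleGraph.adj_comm]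
      · rw [fw a ha, fw b hb, extend_adj_castSucc, ψ.map_adj_iff]; rfl
  choose i hi1 hi2 using hb
  refine Finset.sum_bij (fun ψ hψ => i ψ (Finset.mem_filter.1 hψ).2) ?_ ?_ ?_ ?_
  · intro ψ hψ
    simpa using hi1 ψ _
  · intro ψ hψ ψ' hψ' h
    ext w
    have h2 := hi2 ψ (Finset.mem_filter.1 hψ).2 w w.2
    rw [h, hi2 ψ' (Finset.mem_filter.1 hψ').2 w w.2] at h2
    exact congrArg Fin.val (Fin.castSucc_injective _ h2).symm
  · intro φ hφ
    have hφu := (Finset.mem_filter.1 hφ).2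
    obtain ⟨ψ, hψ⟩ := exists_lift ((SimpleGraph.Embedding.induce ({u}ᶜ : Set V)).trans φ)
      (fun w h => w.2 (φ.injective (h.trans hφu.symm)))
    have hψp : ψ ⟨p, hpu⟩ = v :=
      Fin.castSucc_injective _ ((hψ ⟨p, hpu⟩).symm.trans (apply_eq_of_adj φ hφu hup))
    refine ⟨ψ, by simpa using hψp, ?_⟩
    ext w
    by_cases hw : w = u
    · rw [hw, hi1 ψ hψp, hφu]
    · rw [hi2 ψ hψp w hw, ← hψ ⟨w, hw⟩]; rfl
  · intro ψ hψ
    have hψp := (Finset.mem_filter.1 hψ).2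
    congr 1
    funext w
    by_cases hw : w = u
    · rw [dif_pos hw, hw, hi1 ψ hψp, degR_extend_last]
    · rw [dif_neg hw, hi2 ψ hψp w hw, degR_extend_castSucc]
      congr 2
      rw [← hψp, ψ.injective.eq_iff, Subtype.ext_iff]

/-- The contribution of the new vertex is an observable of lower order: removing the leaf sent to
the new vertex leaves an embedding of a smaller tree. -/
lemma exists_lower {α : ℝ} (hα : 0 < α) {V : Type} [Fintype V] {σ : SimpleGraph V}
    (hσ : σ.IsTree) (g : (V → ℕ) → ℝ) (u : V) (z : ℝ) :
    ∃ f, IsLower (Fintype.card V) f ∧ ∀ (n : ℕ) (G : SimpleGraph (Fin n)), 2 ≤ n → G.IsTree →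
      normZ α n = z → newPart α σ g u G = f n G := by
  classical
  rcases subsingleton_or_nontrivial V with hV | hV
  · refine ⟨_, Or.inl ⟨g (fun _ => 1), rfl⟩, fun n G hn hG _ => ?_⟩
    unfold newPart
    have : ∀ v, (∑ φ : σ ↪g extendTree G v, if φ u = Fin.last n then
        g (fun w => degR (extendTree G v) (φ w)) else 0) = g (fun _ => 1) := by
      intro v
      let φ₀ : σ ↪g extendTree G v :=
        ⟨⟨fun _ => Fin.last n, fun a b _ => Subsingleton.elim a b⟩, fun {a b} => by
          rw [Subsingleton.elim b a]; simp⟩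
      have hφ₀ : ∀ w, φ₀ w = Fin.last n := fun _ => rfl
      rw [Finset.sum_eq_single φ₀, if_pos (hφ₀ u)]
      · simp_rw [hφ₀, degR_extend_last]
      · intro φ _ hφ
        refine if_neg fun h => hφ ?_
        ext w
        rw [hφ₀, Subsingleton.elim w u, h]
      · simp
    simp_rw [this]
    rw [← Finset.sum_mul, sum_attachProb hα hn hG, one_mul]
  · by_cases hdeg : σ.degree u = 1
    · obtain ⟨p, hup, hp⟩ := SimpleGraph.degree_eq_one_iff_existsUnique_adj.1 hdeg
      have hpu : p ∈ ({u}ᶜ : Set V) := hup.ne'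
      refine ⟨_, Or.inr ⟨({u}ᶜ : Set V), inferInstance, σ.induce ({u}ᶜ : Set V),
        fun d => ((d ⟨p, hpu⟩ : ℝ) - 1 + α) / z * g (fun w => if hw : w = u then 1
          else d ⟨w, hw⟩ + if w = p then 1 else 0),
        ⟨hσ.connected.induce_compl_singleton_of_degree_eq_one hdeg, hσ.isAcyclic.induce _⟩, ?_,
        rfl⟩, ?_⟩
      · exact Fintype.card_subtype_lt (x := u) (by simp)
      · intro n G hn hG hz
        unfold newPart embSum
        simp_rw [sum_newPart_leaf σ g hup hp hpu, Finset.mul_sum]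
        rw [Finset.sum_comm]
        refine Finset.sum_congr rfl fun ψ _ => ?_
        rw [Finset.sum_eq_single (ψ ⟨p, hpu⟩), if_pos rfl, attachProb_eq hα hn hG, hz]
        · intro b _ hb
          rw [if_neg hb.symm, mul_zero]
        · simp
    · refine ⟨_, Or.inl ⟨0, rfl⟩, fun n G _ _ _ => ?_⟩
      refine Finset.sum_eq_zero fun v _ => ?_
      rw [Finset.sum_eq_zero, mul_zero]
      intro φ _
      refine if_neg fun h => hdeg ?_
      rw [SimpleGraph.degree_eq_one_iff_existsUnique_adj]
      have hpos := hσ.connected.preconnected.degree_pos_of_nontrivial u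
      obtain ⟨p, hp⟩ := (SimpleGraph.degree_pos_iff_exists_adj _ _).1 hpos
      exact ⟨p, hp, fun w hw => φ.injective
        ((apply_eq_of_adj φ h hw).trans (apply_eq_of_adj φ h hp).symm)⟩

/-! ### Differences of expectations between two seeds -/

/-- Functions of finite graphs, given at every size. -/
abbrev GraphFun : Type := ∀ j : ℕ, SimpleGraph (Fin j) → ℝ

/-- The expectation at total size `n` for the chain started from `S`, as a linear functional. -/
def expAt (α : ℝ) {k : ℕ} (S : SimpleGraph (Fin k)) (n : ℕ) : GraphFun →ₗ[ℝ] ℝ where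
  toFun f := ∫ G, f _ G ∂paLaw α S (n - k)
  map_add' f f' := by
    have := paLaw_finite α S (n - k)
    exact integral_add .of_finite .of_finite
  map_smul' c f := integral_const_mul c _

lemma expAt_add (α : ℝ) {k : ℕ} (S : SimpleGraph (Fin k)) (m : ℕ) (f : GraphFun) :
    expAt α S (k + m) f = ∫ G, f _ G ∂paLaw α S m := by
  let Y : ℕ → ℝ := fun i => ∫ G, f _ G ∂paLaw α S i
  change Y (k + m - k) = Y m
  rw [Nat.add_sub_cancel_left]

lemma expAt_succ (α : ℝ) {k : ℕ} (S : SimpleGraph (Fin k)) {n : ℕ} (h : k ≤ n) (f : GraphFun) :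
    expAt α S (n + 1) f = expAt α S n fun j => stepOp α (f (j + 1)) := by
  obtain ⟨m, rfl⟩ := Nat.exists_eq_add_of_le h
  rw [expAt_add]
  exact (expAt_add α S (m + 1) f).trans (integral_paLaw_succ α S m _)

lemma expAt_zero (α : ℝ) {k : ℕ} (S : SimpleGraph (Fin k)) (f : GraphFun) :
    expAt α S k f = f k S :=
  (expAt_add α S 0 f).trans (integral_paLaw_zero α S (f k))

/-- Only trees are charged by the chain started from a tree. -/
lemma expAt_congr (α : ℝ) {k : ℕ} {S : SimpleGraph (Fin k)} (hS : S.IsTree) {n : ℕ} (h : k ≤ n)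
    {f f' : GraphFun} (hf : ∀ G : SimpleGraph (Fin n), G.IsTree → f n G = f' n G) :
    expAt α S n f = expAt α S n f' := by
  induction n, h using Nat.le_induction generalizing f f' with
  | base =>
    rw [expAt_zero, expAt_zero]
    exact hf S hS
  | succ n hn ih =>
    rw [expAt_succ α S hn, expAt_succ α S hn]
    refine ih fun G hG => ?_
    exact Finset.sum_congr rfl fun u _ => by rw [hf _ (isTree_extend hG u)]

lemma expAt_const {α : ℝ} (hα : 0 < α) {k : ℕ} (hk : 2 ≤ k) {S : SimpleGraph (Fin k)}
    (hS : S.IsTree) {n : ℕ} (h : k ≤ n) (c : ℝ) : expAt α S n (fun _ _ => c) = c := by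
  induction n, h using Nat.le_induction with
  | base =>
    exact expAt_zero α S _
  | succ n hn ih =>
    rw [expAt_succ α S hn]
    refine (expAt_congr α hS hn fun G hG => ?_).trans ih
    unfold stepOp
    rw [← Finset.sum_mul, sum_attachProb hα (hk.trans hn) hG, one_mul]

/-- The difference of the expectations at total size `n` for the seeds `S` and `S'`. -/
def expDiff (α : ℝ) {k k' : ℕ} (S : SimpleGraph (Fin k)) (S' : SimpleGraph (Fin k')) (n : ℕ) :
    GraphFun →ₗ[ℝ] ℝ := expAt α S n - expAt α S' n

/-- The map sending `g` to the observable `embSum σ g`, as a linear map. -/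
def embObs {V : Type} [Fintype V] (σ : SimpleGraph V) : ((V → ℕ) → ℝ) →ₗ[ℝ] GraphFun where
  toFun g := fun _ G => embSum σ g G
  map_add' g g' := by
    funext j G
    exact Finset.sum_add_distrib
  map_smul' c g := by
    funext j G
    exact (Finset.mul_sum _ _ _).symm

/-- The sequence `Λ` of functionals has the properties of `n ↦ expDiff α S S' n` from size `N` on:
it depends only on the values on trees, kills constants, and evolves by `stepOp`. -/
structure IsGrowing (α : ℝ) (N : ℕ) (Λ : ℕ → GraphFun →ₗ[ℝ] ℝ) : Prop where
  two_le : 2 ≤ N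
  congr : ∀ n, N ≤ n → ∀ f f' : GraphFun,
    (∀ G : SimpleGraph (Fin n), G.IsTree → f n G = f' n G) → Λ n f = Λ n f'
  const : ∀ n, N ≤ n → ∀ c : ℝ, Λ n (fun _ _ => c) = 0
  succ : ∀ n, N ≤ n → ∀ f : GraphFun, Λ (n + 1) f = Λ n fun j => stepOp α (f (j + 1))

lemma isGrowing_expDiff {α : ℝ} (hα : 0 < α) {k k' : ℕ} (hk : 2 ≤ k) (hk' : 2 ≤ k')
    {S : SimpleGraph (Fin k)} {S' : SimpleGraph (Fin k')} (hS : S.IsTree) (hS' : S'.IsTree)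
    (hkk : k ≤ k') : IsGrowing α k' (expDiff α S S') where
  two_le := hk'
  congr n hn f f' h := by
    simp only [expDiff, LinearMap.sub_apply]
    rw [expAt_congr α hS (hkk.trans hn) h, expAt_congr α hS' hn h]
  const n hn c := by
    simp only [expDiff, LinearMap.sub_apply]
    rw [expAt_const hα hk hS (hkk.trans hn), expAt_const hα hk' hS' hn, sub_self]
  succ n hn f := by
    simp only [expDiff, LinearMap.sub_apply]
    rw [expAt_succ α S (hkk.trans hn), expAt_succ α S' hn]

section Growing

variable {α : ℝ} {N : ℕ} {Λ : ℕ → GraphFun →ₗ[ℝ] ℝ}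

/-- If all lower observables have zero difference at size `n`, the difference for `σ` evolves
through `growOp` alone. -/
lemma IsGrowing.succ_embObs (hα : 0 < α) (hΛ : IsGrowing α N Λ) {n : ℕ} (hn : N ≤ n) {V : Type}
    [Fintype V] {σ : SimpleGraph V} (hσ : σ.IsTree)
    (hlow : ∀ f, IsLower (Fintype.card V) f → Λ n f = 0) (g : (V → ℕ) → ℝ) :
    Λ (n + 1) (embObs σ g) = Λ n (embObs σ (growOp α (normZ α n) g)) := by
  choose f hf1 hf2 using fun u => exists_lower hα hσ g u (normZ α n)
  have h2 : 2 ≤ n := hΛ.two_le.trans hn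
  rw [hΛ.succ n hn, hΛ.congr n hn _ (embObs σ (growOp α (normZ α n) g) + ∑ u, f u), map_add,
    map_sum, Finset.sum_eq_zero, add_zero]
  · exact fun u _ => hlow _ (hf1 u)
  · intro G hG
    simp only [Pi.add_apply, Finset.sum_apply]
    refine (stepOp_embSum hα σ g h2 hG).trans ?_
    congr 1
    exact Finset.sum_congr rfl fun u _ => hf2 u n G h2 hG rfl

lemma IsLower.mono {r s : ℕ} (h : r ≤ s) {f : GraphFun} (hf : IsLower r f) : IsLower s f := by
  rcases hf with hf | ⟨V, i, σ, g, h1, h2, h3⟩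
  · exact Or.inl hf
  · exact Or.inr ⟨V, i, σ, g, h1, h2.trans_le h, h3⟩

/-- Blindness to all trees with fewer than `r` vertices persists. -/
lemma IsGrowing.lower_eq_zero (hα : 0 < α) (hΛ : IsGrowing α N Λ) {r : ℕ}
    (hlow : ∀ f, IsLower r f → Λ N f = 0) {n : ℕ} (hn : N ≤ n) :
    ∀ f, IsLower r f → Λ n f = 0 := by
  induction n, hn using Nat.le_induction with
  | base => exact hlow
  | succ n hn ih =>
    rintro f (⟨c, rfl⟩ | ⟨V, i, σ, g, h1, h2, rfl⟩)
    · exact hΛ.const _ (by omega) c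
    · refine (hΛ.succ_embObs hα hn h1 (fun f hf => ih f (hf.mono h2.le)) g).trans ?_
      exact ih _ (Or.inr ⟨V, i, σ, _, h1, h2, rfl⟩)

end Growing

/-! ### Rising factorials diagonalise the growth operator -/

/-- The rising factorial `x (x + 1) ⋯ (x + l - 1)`. -/
def rise (x : ℝ) (l : ℕ) : ℝ := ∏ i ∈ Finset.range l, (x + i)

lemma rise_succ (x : ℝ) (l : ℕ) : rise x (l + 1) = rise x l * (x + l) :=
  Finset.prod_range_succ _ _

lemma mul_rise_add_one (x : ℝ) (l : ℕ) : x * rise (x + 1) l = rise x l * (x + l) := by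
  rw [← rise_succ, rise, rise, Finset.prod_range_succ']
  simp only [Nat.cast_zero, add_zero, Nat.cast_add, Nat.cast_one]
  rw [mul_comm]
  congr 1
  exact Finset.prod_congr rfl fun i _ => by ring

lemma rise_pos {x : ℝ} (hx : 0 < x) (l : ℕ) : 0 < rise x l :=
  Finset.prod_pos fun i _ => by positivity

/-- The eigenfunction of the growth operator with exponents `l`. -/
def riseFun {V : Type} [Fintype V] (α : ℝ) (l : V → ℕ) (d : V → ℕ) : ℝ :=
  ∏ u, rise ((d u : ℝ) - 1 + α) (l u)

lemma growOp_riseFun {V : Type} [Fintype V] (α z : ℝ) (l : V → ℕ) :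
    growOp α z (riseFun α l) = (1 + ((∑ u, l u : ℕ) : ℝ) / z) • riseFun α l := by
  classical
  funext d
  have key : ∀ u, ((d u : ℝ) - 1 + α) *
      (riseFun α l (Function.update d u (d u + 1)) - riseFun α l d) = l u * riseFun α l d := by
    intro u
    unfold riseFun
    rw [← Finset.mul_prod_erase _ _ (Finset.mem_univ u),
      ← Finset.mul_prod_erase _ (fun u => rise ((d u : ℝ) - 1 + α) (l u)) (Finset.mem_univ u)]
    have : ∏ x ∈ Finset.univ.erase u,
        rise ((Function.update d u (d u + 1) x : ℝ) - 1 + α) (l x)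
        = ∏ x ∈ Finset.univ.erase u, rise ((d x : ℝ) - 1 + α) (l x) :=
      Finset.prod_congr rfl fun x hx => by
        rw [Function.update_of_ne (Finset.ne_of_mem_erase hx)]
    rw [this, Function.update_self]
    have h := mul_rise_add_one ((d u : ℝ) - 1 + α) (l u)
    have e : ((d u + 1 : ℕ) : ℝ) - 1 + α = (d u : ℝ) - 1 + α + 1 := by push_cast; ring
    rw [e]
    linear_combination (∏ x ∈ Finset.univ.erase u, rise ((d x : ℝ) - 1 + α) (l x)) * h
  simp only [growOp, Pi.smul_apply, smul_eq_mul, div_mul_eq_mul_div, key]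
  rw [← Finset.sum_div, ← Finset.sum_mul]
  push_cast
  ring

/-- The growth factor, between sizes `N` and `n`, of the eigenfunctions of total exponent `w`. -/
def growFactor (α : ℝ) (N w n : ℕ) : ℝ := ∏ i ∈ Finset.Ico N n, (1 + (w : ℝ) / normZ α i)

lemma IsGrowing.embObs_riseFun {α : ℝ} {N : ℕ} {Λ : ℕ → GraphFun →ₗ[ℝ] ℝ} (hα : 0 < α)
    (hΛ : IsGrowing α N Λ) {V : Type} [Fintype V] {σ : SimpleGraph V} (hσ : σ.IsTree)
    (hlow : ∀ f, IsLower (Fintype.card V) f → Λ N f = 0) (l : V → ℕ) {n : ℕ} (hn : N ≤ n) :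
    Λ n (embObs σ (riseFun α l))
      = growFactor α N (∑ u, l u) n * Λ N (embObs σ (riseFun α l)) := by
  induction n, hn using Nat.le_induction with
  | base => simp [growFactor]
  | succ n hn ih =>
    rw [hΛ.succ_embObs hα hn hσ (hΛ.lower_eq_zero hα hlow hn), growOp_riseFun, map_smul, map_smul,
      ih, growFactor, growFactor, Finset.prod_Ico_succ_top hn, smul_eq_mul]
    ring

/-- A rising factorial times a monic polynomial given by its roots, expanded in rising factorials.
The leading coefficient is `1`. -/
lemma exists_rise_expansion (a : ℕ → ℝ) (L m : ℕ) :
    ∃ c : ℕ → ℝ, c m = 1 ∧ ∀ x, rise x L * ∏ i ∈ Finset.range m, (x - a i)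
      = ∑ j ∈ Finset.range (m + 1), c j * rise x (L + j) := by
  induction m with
  | zero => exact ⟨fun _ => 1, rfl, fun x => by simp⟩
  | succ m ih =>
    obtain ⟨c, hc, h⟩ := ih
    -- From `(x - a) rise x j = rise x (j + 1) - (j + a) rise x j`.
    refine ⟨fun j => (if j = 0 then 0 else c (j - 1))
      - if j = m + 1 then 0 else c j * ((L + j : ℕ) + a m), by simp [hc], fun x => ?_⟩
    rw [Finset.prod_range_succ, ← mul_assoc, h, Finset.sum_mul]
    simp_rw [sub_mul, Finset.sum_sub_distrib]
    rw [Finset.sum_range_succ' (n := m + 1), Finset.sum_range_succ _ (m + 1)]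
    have h2 : ∑ j ∈ Finset.range (m + 1),
        (if j = m + 1 then 0 else c j * ((L + j : ℕ) + a m)) * rise x (L + j)
        = ∑ j ∈ Finset.range (m + 1), c j * ((L + j : ℕ) + a m) * rise x (L + j) :=
      Finset.sum_congr rfl fun j hj => by rw [if_neg (Finset.mem_range.1 hj).ne]
    rw [h2]
    simp only [if_true, zero_mul, add_zero, Nat.add_sub_cancel, Nat.add_eq_zero_iff, one_ne_zero,
      and_false, if_false, ← Finset.sum_sub_distrib]
    refine Finset.sum_congr rfl fun j _ => ?_
    rw [← add_assoc, rise_succ]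
    ring

/-! ### Asymptotics -/

/-- The growth factor is a quotient of two of Euler's Gamma products. -/
lemma tendsto_growFactor {α : ℝ} (hα : 0 < α) {N : ℕ} (hN : 2 ≤ N) (w : ℕ) :
    ∃ c : ℝ, 0 < c ∧ Tendsto (fun n : ℕ => growFactor α N w n / (n : ℝ) ^ ((w : ℝ) / (1 + α)))
      atTop (nhds c) := by
  have hs : 0 < 1 + α := by linarith
  have hN' : (2 : ℝ) ≤ N := by exact_mod_cast hN
  set A : ℝ := N - 2 / (1 + α) with hA
  set B : ℝ := A + w / (1 + α) with hB
  have hA0 : 0 < A := by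
    rw [hA, sub_pos, div_lt_iff₀ hs]
    nlinarith
  have hB0 : 0 < B := by positivity
  refine ⟨Real.Gamma A / Real.Gamma B, div_pos (Real.Gamma_pos_of_pos hA0)
    (Real.Gamma_pos_of_pos hB0), ?_⟩
  rw [← tendsto_add_atTop_iff_nat (N + 1)]
  have h1 := (Real.GammaSeq_tendsto_Gamma A).div (Real.GammaSeq_tendsto_Gamma B)
    (Real.Gamma_pos_of_pos hB0).ne'
  have h2 : Tendsto (fun m : ℕ => ((m : ℝ) / (m + ((N : ℝ) + 1))) ^ ((w : ℝ) / (1 + α)))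
      atTop (nhds 1) := by
    simpa using (tendsto_natCast_div_add_atTop ((N : ℝ) + 1)).rpow_const
      (p := (w : ℝ) / (1 + α)) (Or.inl one_ne_zero)
  have h3 := h1.mul h2
  rw [mul_one] at h3
  refine h3.congr' ?_
  filter_upwards [eventually_gt_atTop 0] with m hm
  have hm' : (0 : ℝ) < m := by exact_mod_cast hm
  have hprod : growFactor α N w (m + (N + 1))
      = (∏ j ∈ Finset.range (m + 1), (B + j)) / ∏ j ∈ Finset.range (m + 1), (A + j) := by
    rw [growFactor, Finset.prod_Ico_eq_prod_range, ← Finset.prod_div_distrib,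
      show m + (N + 1) - N = m + 1 by omega]
    refine Finset.prod_congr rfl fun j _ => ?_
    have e : normZ α (N + j) = (1 + α) * (A + j) := by
      rw [normZ, hA]; push_cast; field_simp; ring
    have : A + j ≠ 0 := by positivity
    rw [e, hB]
    field_simp
    ring
  have hpA : ∏ j ∈ Finset.range (m + 1), (A + j) ≠ 0 :=
    Finset.prod_ne_zero_iff.2 fun j _ => by positivity
  have hpB : ∏ j ∈ Finset.range (m + 1), (B + j) ≠ 0 :=
    Finset.prod_ne_zero_iff.2 fun j _ => by positivity
  have hpow : (m : ℝ) ^ B = (m : ℝ) ^ A * (m : ℝ) ^ ((w : ℝ) / (1 + α)) := by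
    rw [hB, Real.rpow_add hm']
  have hfac : (m.factorial : ℝ) ≠ 0 := by positivity
  simp only [Pi.div_apply]
  rw [hprod, Real.GammaSeq, Real.GammaSeq, Real.div_rpow hm'.le (by positivity), hpow]
  have h4 : (m : ℝ) ^ A ≠ 0 := (Real.rpow_pos_of_pos hm' _).ne'
  have h5 : (m : ℝ) ^ ((w : ℝ) / (1 + α)) ≠ 0 := (Real.rpow_pos_of_pos hm' _).ne'
  have h6 : ((m : ℝ) + ((N : ℝ) + 1)) ^ ((w : ℝ) / (1 + α)) ≠ 0 :=
    (Real.rpow_pos_of_pos (by positivity) _).ne'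
  push_cast
  field_simp

lemma tendsto_growFactor_zero {α : ℝ} (hα : 0 < α) {N : ℕ} (hN : 2 ≤ N) {w' w : ℕ}
    (hw : w' < w) :
    Tendsto (fun n : ℕ => growFactor α N w' n / (n : ℝ) ^ ((w : ℝ) / (1 + α))) atTop (nhds 0) := by
  obtain ⟨c, -, h⟩ := tendsto_growFactor hα hN w'
  have hs : 0 < 1 + α := by linarith
  have hw' : (w' : ℝ) < w := by exact_mod_cast hw
  have h2 : Tendsto (fun n : ℕ => (n : ℝ) ^ (-(((w : ℝ) - w') / (1 + α)))) atTop (nhds 0) :=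
    (tendsto_rpow_neg_atTop (div_pos (by linarith) hs)).comp tendsto_natCast_atTop_atTop
  have h3 := h.mul h2
  rw [mul_zero] at h3
  refine h3.congr' ?_
  filter_upwards [eventually_gt_atTop 0] with n hn
  have hn' : (0 : ℝ) < n := by exact_mod_cast hn
  rw [show -(((w : ℝ) - w') / (1 + α)) = w' / (1 + α) - w / (1 + α) by ring,
    Real.rpow_sub hn']
  have h5 : (n : ℝ) ^ ((w' : ℝ) / (1 + α)) ≠ 0 := (Real.rpow_pos_of_pos hn' _).ne'
  field_simp

/-- Only the degrees between `1` and `n` matter for trees with `n` vertices. -/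
lemma IsGrowing.embObs_congr {α : ℝ} {N : ℕ} {Λ : ℕ → GraphFun →ₗ[ℝ] ℝ}
    (hΛ : IsGrowing α N Λ) {n : ℕ} (hn : N ≤ n) {V : Type} [Fintype V] (σ : SimpleGraph V)
    {g g' : (V → ℕ) → ℝ} (h : ∀ d : V → ℕ, (∀ u, 1 ≤ d u ∧ d u ≤ n) → g d = g' d) :
    Λ n (embObs σ g) = Λ n (embObs σ g') :=
  hΛ.congr n hn _ _ fun _ hG => Finset.sum_congr rfl fun _ _ =>
    h _ fun _ => ⟨one_le_degR hG (hΛ.two_le.trans hn) _, degR_le _ _⟩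

open Classical in
/-- A product over the vertices of rising factorials times monic polynomials given by their roots,
expanded in eigenfunctions. -/
lemma exists_riseFun_expansion {V : Type} [Fintype V] (α : ℝ) (a : V → ℕ → ℝ) (L : ℕ)
    (m : V → ℕ) :
    ∃ c : (V → ℕ) → ℝ, c m = 1 ∧
      (fun d : V → ℕ => ∏ u, (rise ((d u : ℝ) - 1 + α) L *
        ∏ i ∈ Finset.range (m u), ((d u : ℝ) - 1 + α - a u i)))
      = ∑ j ∈ Fintype.piFinset fun u => Finset.range (m u + 1),
        c j • riseFun α (fun u => L + j u) := by
  choose c hc h using fun u => exists_rise_expansion (a u) L (m u)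
  refine ⟨fun j => ∏ u, c u (j u), Finset.prod_eq_one fun u _ => hc u, ?_⟩
  funext d
  simp_rw [h, Finset.prod_univ_sum, Finset.prod_mul_distrib]
  simp [riseFun, Finset.sum_apply]

/-- The eigenfunctions with large exponents separate the functions of degrees on trees of a given
size, by Lagrange interpolation. -/
lemma IsGrowing.exists_riseFun_ne_zero {α : ℝ} (hα : 0 < α) {N : ℕ} {Λ : ℕ → GraphFun →ₗ[ℝ] ℝ}
    (hΛ : IsGrowing α N Λ) {V : Type} [Fintype V] (σ : SimpleGraph V) {g : (V → ℕ) → ℝ}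
    (hg : Λ N (embObs σ g) ≠ 0) (L : ℕ) :
    ∃ l : V → ℕ, (∀ u, L ≤ l u) ∧ Λ N (embObs σ (riseFun α l)) ≠ 0 := by
  classical
  by_contra! hcon
  apply hg
  have hsingle : ∀ d₀ : V → ℕ, (∀ u, 1 ≤ d₀ u ∧ d₀ u ≤ N) →
      Λ N (embObs σ (Pi.single d₀ 1)) = 0 := by
    intro d₀ hd₀
    -- The roots: all degrees in `[1, N]` other than `d₀ u`, which is replaced by the degree `0`.
    obtain ⟨c, -, hc⟩ := exists_riseFun_expansion α
      (fun u i => (((if i + 1 = d₀ u then 0 else i + 1 : ℕ) : ℝ) - 1 + α)) L (fun _ : V => N)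
    set q : (V → ℕ) → ℝ := fun d : V → ℕ => ∏ u, (rise ((d u : ℝ) - 1 + α) L *
        ∏ i ∈ Finset.range N, ((d u : ℝ) - 1 + α -
          (((if i + 1 = d₀ u then 0 else i + 1 : ℕ) : ℝ) - 1 + α))) with hq
    have h0 : Λ N (embObs σ q) = 0 := by
      rw [hc, map_sum, map_sum]
      refine Finset.sum_eq_zero fun j _ => ?_
      rw [map_smul, map_smul, hcon _ fun u => Nat.le_add_right _ _, smul_zero]
    have h1 : Λ N (embObs σ q) = Λ N (embObs σ (q d₀ • Pi.single d₀ 1)) := by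
      refine hΛ.embObs_congr le_rfl σ fun d hd => ?_
      by_cases hdd : d = d₀
      · subst hdd; simp
      · rw [Pi.smul_apply, Pi.single_eq_of_ne hdd, smul_zero]
        obtain ⟨u, hu⟩ := Function.ne_iff.1 hdd
        refine Finset.prod_eq_zero (Finset.mem_univ u) (mul_eq_zero_of_right _ ?_)
        have := hd u
        refine Finset.prod_eq_zero (Finset.mem_range.2 (by omega : d u - 1 < N)) ?_
        rw [Nat.sub_add_cancel this.1, if_neg hu, sub_self]
    have hne : q d₀ ≠ 0 := by
      refine Finset.prod_ne_zero_iff.2 fun u _ => mul_ne_zero ?_ ?_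
      · have : (1 : ℝ) ≤ d₀ u := by exact_mod_cast (hd₀ u).1
        exact (rise_pos (by linarith) _).ne'
      · refine Finset.prod_ne_zero_iff.2 fun i _ => ?_
        have : d₀ u ≠ if i + 1 = d₀ u then 0 else i + 1 := by
          have := (hd₀ u).1
          split_ifs <;> omega
        have : (d₀ u : ℝ) ≠ (if i + 1 = d₀ u then 0 else i + 1 : ℕ) := by exact_mod_cast this
        intro h
        exact this (by linarith)
    rw [h0, map_smul, map_smul, smul_eq_mul] at h1
    exact (mul_eq_zero.1 h1.symm).resolve_left hne
  have h2 : Λ N (embObs σ g) = Λ N (embObs σ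
      (∑ d₀ ∈ Fintype.piFinset fun _ : V => Finset.Icc 1 N, g d₀ • Pi.single d₀ 1)) := by
    refine hΛ.embObs_congr le_rfl σ fun d hd => ?_
    rw [Finset.sum_apply, Finset.sum_eq_single d]
    · simp
    · intro b _ hb
      rw [Pi.smul_apply, Pi.single_eq_of_ne hb.symm, smul_zero]
    · intro h
      exact absurd (Fintype.mem_piFinset.2 fun u => Finset.mem_Icc.2 (hd u)) h
  rw [h2, map_sum, map_sum]
  refine Finset.sum_eq_zero fun d hd => ?_
  rw [map_smul, map_smul, hsingle d fun u => Finset.mem_Icc.1 (Fintype.mem_piFinset.1 hd u),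
    smul_zero]

/-- The function of the degrees defining the observable of decoration `l`. -/
def fallFun {V : Type} [Fintype V] (l d : V → ℕ) : ℝ :=
  ∏ u, ((d u - 1).descFactorial (l u) : ℝ)

lemma cast_descFactorial_eq_prod (x l : ℕ) :
    (x.descFactorial l : ℝ) = ∏ i ∈ Finset.range l, ((x : ℝ) - i) := by
  induction l with
  | zero => simp
  | succ l ih =>
    rw [Finset.prod_range_succ, ← ih, Nat.descFactorial_succ]
    rcases le_or_gt l x with h | h
    · push_cast [h]; ring
    · simp [Nat.descFactorial_of_lt h]

/-- If all smaller trees are blind, then `Λ n` of the observable of decoration `l` has the order of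
its leading eigenfunction. -/
lemma IsGrowing.tendsto_embObs_fallFun {α : ℝ} {N : ℕ} {Λ : ℕ → GraphFun →ₗ[ℝ] ℝ} (hα : 0 < α)
    (hΛ : IsGrowing α N Λ) {V : Type} [Fintype V] {σ : SimpleGraph V} (hσ : σ.IsTree)
    (hlow : ∀ f, IsLower (Fintype.card V) f → Λ N f = 0) (l : V → ℕ) :
    ∃ c : ℝ, 0 < c ∧ Tendsto (fun n : ℕ => Λ n (embObs σ (fallFun l)) /
      (n : ℝ) ^ (((∑ u, l u : ℕ) : ℝ) / (1 + α))) atTop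
        (nhds (c * Λ N (embObs σ (riseFun α l)))) := by
  classical
  obtain ⟨c, hc, h⟩ := exists_riseFun_expansion α (fun (_ : V) i => (i : ℝ) + α) 0 l
  obtain ⟨C, hC, hlim⟩ := tendsto_growFactor hα hΛ.two_le (∑ u, l u)
  refine ⟨C, hC, ?_⟩
  simp only [zero_add] at h
  have key : ∀ n, N ≤ n → Λ n (embObs σ (fallFun l))
      = ∑ j ∈ Fintype.piFinset fun u => Finset.range (l u + 1),
        c j * (growFactor α N (∑ u, j u) n * Λ N (embObs σ (riseFun α j))) := by
    intro n hn
    have e : Λ n (embObs σ (fallFun l)) = Λ n (embObs σ (fun d : V → ℕ =>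
        ∏ u, (rise ((d u : ℝ) - 1 + α) 0 *
          ∏ i ∈ Finset.range (l u), ((d u : ℝ) - 1 + α - ((i : ℝ) + α))))) := by
      refine hΛ.embObs_congr hn σ fun d hd => Finset.prod_congr rfl fun u _ => ?_
      rw [cast_descFactorial_eq_prod, rise, Finset.prod_range_zero, one_mul]
      refine Finset.prod_congr rfl fun i _ => ?_
      rw [Nat.cast_sub (hd u).1]
      push_cast
      ring
    rw [e, h, map_sum, map_sum]
    refine Finset.sum_congr rfl fun j _ => ?_
    rw [map_smul, map_smul, hΛ.embObs_riseFun hα hσ hlow j hn, smul_eq_mul]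
  have hl : l ∈ Fintype.piFinset fun u => Finset.range (l u + 1) :=
    Fintype.mem_piFinset.2 fun u => Finset.mem_range.2 (Nat.lt_succ_self _)
  have hterm : ∀ j ∈ Fintype.piFinset fun u => Finset.range (l u + 1),
      Tendsto (fun n : ℕ => c j * (growFactor α N (∑ u, j u) n /
        (n : ℝ) ^ (((∑ u, l u : ℕ) : ℝ) / (1 + α)) * Λ N (embObs σ (riseFun α j)))) atTop
        (nhds (if j = l then C * Λ N (embObs σ (riseFun α l)) else 0)) := by
    intro j hj
    by_cases hjl : j = l
    · subst hjl
      rw [if_pos rfl, hc]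
      simp_rw [one_mul]
      exact hlim.mul_const _
    · rw [if_neg hjl]
      have hle : ∀ u, j u ≤ l u := fun u =>
        Nat.lt_succ_iff.1 (Finset.mem_range.1 (Fintype.mem_piFinset.1 hj u))
      obtain ⟨u, hu⟩ := Function.ne_iff.1 hjl
      have hlt : ∑ u, j u < ∑ u, l u :=
        Finset.sum_lt_sum (fun u _ => hle u) ⟨u, Finset.mem_univ u, lt_of_le_of_ne (hle u) hu⟩
      simpa using ((tendsto_growFactor_zero hα hΛ.two_le hlt).mul_const
        (Λ N (embObs σ (riseFun α j)))).const_mul (c j)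
  have hsum := tendsto_finsetSum _ hterm
  rw [Finset.sum_ite_eq' _ l, if_pos hl] at hsum
  refine hsum.congr' ?_
  filter_upwards [eventually_ge_atTop N] with n hn
  rw [key n hn, Finset.sum_div]
  exact Finset.sum_congr rfl fun j _ => by ring

/-! ### Distinguishing two seeds at the larger of their sizes -/

/-- The chain started from `S` has positive probability of being at `G` at size `n`, expressed by
the positivity of the expectations of the nonnegative functions that are positive at `G`. -/
def IsCharged (α : ℝ) {k : ℕ} (S : SimpleGraph (Fin k)) (n : ℕ) (G : SimpleGraph (Fin n)) : Prop :=
  ∀ f : GraphFun, (∀ j H, 0 ≤ f j H) → 0 < f n G → 0 < expAt α S n f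

lemma isCharged_self (α : ℝ) {k : ℕ} (S : SimpleGraph (Fin k)) : IsCharged α S k S :=
  fun f _ h => by rwa [expAt_zero]

lemma IsCharged.extend {α : ℝ} (hα : 0 < α) {k : ℕ} {S : SimpleGraph (Fin k)} {n : ℕ}
    (h : k ≤ n) (hn : 2 ≤ n) {G : SimpleGraph (Fin n)} (hG : G.IsTree) (hc : IsCharged α S n G)
    (v : Fin n) : IsCharged α S (n + 1) (extendTree G v) := by
  intro f hf hv
  rw [expAt_succ α S h]
  have h0 : ∀ j (H : SimpleGraph (Fin j)) (u : Fin j),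
      0 ≤ attachProb α H u * f (j + 1) (extendTree H u) :=
    fun j H u => mul_nonneg (attachProb_nonneg α H u) (hf _ _)
  refine hc _ (fun j H => Finset.sum_nonneg fun u _ => h0 j H u) ?_
  exact (mul_pos (attachProb_pos hα hn hG v) hv).trans_le
    (Finset.single_le_sum (f := fun u => attachProb α G u * f (n + 1) (extendTree G u))
      (fun u _ => h0 n G u) (Finset.mem_univ v))

lemma exists_isCharged {α : ℝ} (hα : 0 < α) {k : ℕ} (hk : 2 ≤ k) {S : SimpleGraph (Fin k)}
    (hS : S.IsTree) {n : ℕ} (h : k ≤ n) :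
    ∃ G : SimpleGraph (Fin n), G.IsTree ∧ IsCharged α S n G := by
  induction n, h using Nat.le_induction with
  | base => exact ⟨S, hS, isCharged_self α S⟩
  | succ n hn ih =>
    obtain ⟨G, hG, hc⟩ := ih
    let v : Fin n := ⟨0, by omega⟩
    exact ⟨_, isTree_extend hG v, hc.extend hα hn (hk.trans hn) hG v⟩

/-- A tree with at least three vertices is not regular. -/
lemma exists_degR_ne {n : ℕ} (hn : 3 ≤ n) {G : SimpleGraph (Fin n)} (hG : G.IsTree) :
    ∃ u v, degR G u ≠ degR G v := by
  by_contra! h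
  have h1 := sum_degR_of_isTree hG
  rw [Finset.sum_congr rfl fun u _ => h u ⟨0, by omega⟩] at h1
  simp only [Finset.sum_const, Finset.card_univ, Fintype.card_fin, smul_eq_mul] at h1
  rcases Nat.lt_or_ge (degR G ⟨0, by omega⟩) 2 with h2 | h2 <;> nlinarith

lemma degR_iso {V W : Type*} {G : SimpleGraph V} {H : SimpleGraph W} (e : G ≃g H) (v : V) :
    degR H (e v) = degR G v :=
  (Nat.card_congr (e.toEquiv.subtypeEquiv fun _ => e.map_adj_iff.symm)).symm

/-- The effect of one growth step on the sum of the squared degrees. -/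
lemma sum_sq_degR_extend {n : ℕ} (G : SimpleGraph (Fin n)) (v : Fin n) :
    ∑ a, degR (extendTree G v) a ^ 2 = ∑ a, degR G a ^ 2 + 2 * degR G v + 2 := by
  rw [Fin.sum_univ_castSucc, degR_extend_last]
  have h : ∀ a, degR (extendTree G v) a.castSucc ^ 2
      = degR G a ^ 2 + if a = v then 2 * degR G a + 1 else 0 := by
    intro a
    rw [degR_extend_castSucc]
    split_ifs <;> ring
  simp only [h, Finset.sum_add_distrib, Finset.sum_ite_eq', Finset.mem_univ, if_true]
  ring

/-- Some tree charged by the chain from `S` differs from `S'`. After at least one step this holds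
because extensions at two vertices of different degrees are not isomorphic. -/
lemma exists_isCharged_not_iso {α : ℝ} (hα : 0 < α) {k k' : ℕ} (hk : 3 ≤ k) (hkk : k ≤ k')
    {S : SimpleGraph (Fin k)} (hS : S.IsTree) {S' : SimpleGraph (Fin k')}
    (hne : ¬ Nonempty (S ≃g S')) :
    ∃ G : SimpleGraph (Fin k'), G.IsTree ∧ IsCharged α S k' G ∧ ¬ Nonempty (G ≃g S') := by
  rcases hkk.eq_or_lt with rfl | hlt
  · exact ⟨S, hS, isCharged_self α S, hne⟩
  · obtain ⟨n, rfl⟩ := Nat.exists_eq_add_of_lt hlt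
    obtain ⟨G, hG, hc⟩ := exists_isCharged hα (by omega) hS (Nat.le_add_right k n)
    obtain ⟨u, v, huv⟩ := exists_degR_ne (by omega) hG
    by_contra! hcon
    have h : ∀ a, IsCharged α S (k + n + 1) (extendTree G a) :=
      hc.extend hα (Nat.le_add_right k n) (by omega) hG
    have hsq : ∀ a, ∑ b, degR S' b ^ 2 = ∑ b, degR G b ^ 2 + 2 * degR G a + 2 := by
      intro a
      obtain ⟨e⟩ := hcon _ (isTree_extend hG a) (h a)
      rw [← sum_sq_degR_extend, ← e.toEquiv.sum_comp]
      exact Finset.sum_congr rfl fun b _ => congrArg (· ^ 2) (degR_iso e b)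
    have := hsq u
    have := hsq v
    omega

/-- The embeddings of a charged tree of full size distinguish the two seeds. -/
lemma exists_expDiff_ne_zero {α : ℝ} (hα : 0 < α) {k k' : ℕ} (hk : 3 ≤ k) (hkk : k ≤ k')
    {S : SimpleGraph (Fin k)} (hS : S.IsTree) {S' : SimpleGraph (Fin k')}
    (hne : ¬ Nonempty (S ≃g S')) :
    ∃ σ : SimpleGraph (Fin k'), σ.IsTree ∧ expDiff α S S' k' (embObs σ fun _ => 1) ≠ 0 := by
  obtain ⟨G, hG, hc, hiso⟩ := exists_isCharged_not_iso hα hk hkk hS hne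
  refine ⟨G, hG, ?_⟩
  have h0 : embSum G (fun _ => 1) S' = 0 := by
    refine Finset.sum_eq_zero fun φ _ => absurd ⟨?_⟩ hiso
    exact RelIso.ofSurjective φ (Finite.surjective_of_injective φ.injective)
  have h1 : 0 < embSum G (fun _ => 1) G := by
    have : Nonempty (G ↪g G) := ⟨SimpleGraph.Embedding.refl⟩
    exact Finset.sum_pos (fun _ _ => one_pos) Finset.univ_nonempty
  have h2 : 0 < expAt α S k' (embObs G fun _ => 1) :=
    hc _ (fun j H => Finset.sum_nonneg fun _ _ => zero_le_one) h1
  rw [expDiff, LinearMap.sub_apply, expAt_zero]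
  exact sub_ne_zero.2 (h0.trans_lt h2).ne'

/-! ### The observable of a minimal distinguishing tree -/

lemma embSum_iso {V W : Type} [Fintype V] [Fintype W] {σ : SimpleGraph V} {τ : SimpleGraph W}
    (e : σ ≃g τ) (g : (V → ℕ) → ℝ) {n : ℕ} (G : SimpleGraph (Fin n)) :
    embSum τ (fun d => g (d ∘ e)) G = embSum σ g G := by
  refine Fintype.sum_equiv ⟨fun φ => e.toEmbedding.trans φ, fun φ => e.symm.toEmbedding.trans φ,
    fun φ => ?_, fun φ => ?_⟩ _ _ fun φ => rfl
  · ext a; exact congrArg (fun x => (φ x : ℕ)) (e.apply_symm_apply a)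
  · ext a; exact congrArg (fun x => (φ x : ℕ)) (e.symm_apply_apply a)

/-- A tree, with the least number of vertices, whose embeddings distinguish. -/
lemma IsGrowing.exists_minimal {α : ℝ} {N : ℕ} {Λ : ℕ → GraphFun →ₗ[ℝ] ℝ} (hΛ : IsGrowing α N Λ)
    {r₀ : ℕ} {σ₀ : SimpleGraph (Fin r₀)} (hσ₀ : σ₀.IsTree) {g₀ : (Fin r₀ → ℕ) → ℝ}
    (hg₀ : Λ N (embObs σ₀ g₀) ≠ 0) :
    ∃ (r : ℕ) (σ : SimpleGraph (Fin r)) (g : (Fin r → ℕ) → ℝ), σ.IsTree ∧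
      Λ N (embObs σ g) ≠ 0 ∧ ∀ f, IsLower r f → Λ N f = 0 := by
  classical
  have hex : ∃ r, ∃ (σ : SimpleGraph (Fin r)) (g : (Fin r → ℕ) → ℝ), σ.IsTree ∧
      Λ N (embObs σ g) ≠ 0 := ⟨r₀, σ₀, g₀, hσ₀, hg₀⟩
  obtain ⟨σ, g, hσ, hg⟩ := Nat.find_spec hex
  refine ⟨Nat.find hex, σ, g, hσ, hg, ?_⟩
  rintro f (⟨c, rfl⟩ | ⟨V, i, τ, g', hτ, hV, rfl⟩)
  · exact hΛ.const N le_rfl c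
  · by_contra hne
    have e := SimpleGraph.Iso.map (Fintype.equivFin V) τ
    refine Nat.find_min hex hV ⟨_, fun d => g' (d ∘ e), e.isTree_iff.1 hτ, ?_⟩
    have : embObs (τ.map (Fintype.equivFin V)) (fun d => g' (d ∘ e))
        = fun _ G => embSum τ g' G := by
      funext j G
      exact embSum_iso e g' G
    rwa [this]

lemma obs_eq_embSum (τ : DecTree) {n : ℕ} (G : SimpleGraph (Fin n)) :
    τ.obs G = embSum τ.tree (fallFun τ.dec) G :=
  finsum_eq_sum_of_fintype _

/-- Decorations at least `2` leave no loose leaves. -/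
lemma wt_eq_sum (τ : DecTree) (hn : 0 < τ.n) (h : ∀ u, 2 ≤ τ.dec u) : τ.wt = ∑ u, τ.dec u := by
  have h0 : ∀ u, τ.dec u ≠ 0 := fun u => by have := h u; omega
  have : IsEmpty {v // degR τ.tree v = 1 ∧ τ.dec v = 0} := ⟨fun v => h0 v v.2.2⟩
  rw [DecTree.wt, weightG, if_neg fun h' => h0 ⟨0, hn⟩ (h'.2 _), Nat.card_of_isEmpty, add_zero]

lemma asympEquiv_of_tendsto {u v : ℕ → ℝ} {c : ℝ} (hc : c ≠ 0) (hv : ∀ᶠ n in atTop, 0 < v n)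
    (h : Tendsto (fun n => u n / v n) atTop (nhds c)) : asympEquiv (fun n => |u n|) v := by
  have hc' : 0 < |c| := abs_pos.2 hc
  refine ⟨max (2 * |c|) (2 / |c|), lt_max_of_lt_left (by positivity), ?_⟩
  have h1 := h.abs.eventually (Ioo_mem_nhds (half_lt_self hc') (by linarith : |c| < 2 * |c|))
  filter_upwards [h1, hv] with n hn hvn
  rw [abs_div, abs_of_pos hvn] at hn
  have h2 := (div_lt_iff₀ hvn).1 hn.2
  have h3 := (lt_div_iff₀ hvn).1 hn.1
  constructor
  · exact h2.le.trans (mul_le_mul_of_nonneg_right (le_max_left _ _) hvn.le)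
  · refine le_trans ?_ (mul_le_mul_of_nonneg_right (le_max_right _ _) (abs_nonneg _))
    rw [div_mul_eq_mul_div, le_div_iff₀ hc']
    linarith

/-- The case in which `S` is the smaller seed; the general case follows by symmetry. -/
lemma exists_decTree {α : ℝ} (hα : 0 < α) {k k' : ℕ} (hk : 3 ≤ k) (hkk : k ≤ k')
    {S : SimpleGraph (Fin k)} (hS : S.IsTree) {S' : SimpleGraph (Fin k')} (hS' : S'.IsTree)
    (hne : ¬ Nonempty (S ≃g S')) :
    ∃ τ : DecTree, τ.tree.IsTree ∧ (∀ u, 2 ≤ τ.dec u) ∧ 1 + α < (τ.wt : ℝ) ∧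
      asympEquiv
        (fun n => |(∫ G, τ.obs G ∂paLaw α S (n - k)) - ∫ G, τ.obs G ∂paLaw α S' (n - k')|)
        (fun n => (n : ℝ) ^ ((τ.wt : ℝ) / (1 + α))) := by
  have hΛ := isGrowing_expDiff hα (by omega) (by omega) hS hS' hkk
  obtain ⟨σ₀, hσ₀, hg₀⟩ := exists_expDiff_ne_zero hα hk hkk hS hne
  obtain ⟨r, σ, g, hσ, hg, hlow⟩ := hΛ.exists_minimal hσ₀ hg₀
  obtain ⟨l, hl, hne'⟩ := hΛ.exists_riseFun_ne_zero hα σ hg (max 2 (⌈1 + α⌉₊ + 1))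
  have hr : 0 < r := by
    obtain ⟨v⟩ := hσ.connected.nonempty
    exact v.pos
  have hl2 : ∀ u, 2 ≤ l u := fun u => (le_max_left _ _).trans (hl u)
  have hwt : DecTree.wt ⟨r, σ, l⟩ = ∑ u, l u := wt_eq_sum _ hr hl2
  refine ⟨⟨r, σ, l⟩, hσ, hl2, ?_, ?_⟩
  · rw [hwt]
    have h1 : ⌈1 + α⌉₊ < ∑ u, l u :=
      ((le_max_right _ _).trans (hl ⟨0, hr⟩)).trans
        (Finset.single_le_sum (f := l) (fun _ _ => Nat.zero_le _) (Finset.mem_univ _))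
    exact (Nat.le_ceil _).trans_lt (by exact_mod_cast h1)
  · obtain ⟨c, hc, hlim⟩ := hΛ.tendsto_embObs_fallFun hα hσ
      (by rwa [Fintype.card_fin]) l
    rw [hwt]
    simp only [obs_eq_embSum]
    refine asympEquiv_of_tendsto (mul_ne_zero hc.ne' hne') ?_ hlim
    filter_upwards [eventually_gt_atTop 0] with n hn
    exact Real.rpow_pos_of_pos (by exact_mod_cast hn) _

/-- **Theorem 4.1.** For any two non-isomorphic seed trees `S, S'` of sizes
`≥ 3`, there is a decorated tree `τ` with `w(τ) > 1 + α` and all decorations `≥ 2` such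
that `|E[F_τ(T_n^S)] - E[F_τ(T_n^{S'})]| ≈ n^{w(τ)/(1+α)}`. -/
theorem seed_difference_observable (α : ℝ) (hα : 0 < α) (k k' : ℕ) (hk : 3 ≤ k)
    (hk' : 3 ≤ k') (S : SimpleGraph (Fin k)) (hS : S.IsTree)
    (S' : SimpleGraph (Fin k')) (hS' : S'.IsTree) (hne : ¬ Nonempty (S ≃g S')) :
    ∃ τ : DecTree, τ.tree.IsTree ∧ (∀ u, 2 ≤ τ.dec u) ∧ 1 + α < (τ.wt : ℝ) ∧
      asympEquiv
        (fun n => |(∫ G, τ.obs G ∂paLaw α S (n - k)) - ∫ G, τ.obs G ∂paLaw α S' (n - k')|)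
        (fun n => (n : ℝ) ^ ((τ.wt : ℝ) / (1 + α))) := by
  rcases le_total k k' with h | h
  · exact exists_decTree hα hk h hS hS' hne
  · have hne' : ¬ Nonempty (S' ≃g S) := fun ⟨e⟩ => hne ⟨e.symm⟩
    obtain ⟨τ, h1, h2, h3, h4⟩ := exists_decTree hα hk' h hS' hS hne'
    refine ⟨τ, h1, h2, h3, ?_⟩
    convert h4 using 2 with n
    exact abs_sub_comm _ _

end AffinePA
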